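/- Let s ≥ 4 and set w1 = (2^{2s−1} + (−1)^s·2^s)/3 and w2 = (2^{2s−1} − (−1)^s·2^{s−1})/3. The extended code of C_{(2,n,3,1)}, where n = (4^s−1)/3, has length n+1, dimension n − 2s, and minimum distance exactly 4, and it is distance-optimal with respect to the sphere packing bound: every binary linear code of length n+1 and dimension n − 2s has minimum distance at most 4. Furthermore, the dual of this extended code has dimension 2s + 1 and its weight distribution is: exactly 1 codeword of weight 0, exactly n codewords of weight w1, exactly 2n codewords of weight w2, exactly n codewords of weight n+1−w1, exactly 2n codewords of weight n+1−w2, exactly 1 codeword of weight n+1, and no codewords of any other weight. -/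

import Mathlib

open Finset

/-- The binary cyclic (BCH-type) code of length `n` over GF(2), consisting of all
words `c` such that `∑ i, c i • β ^ (j * i) = 0` for every `j` in the check set `J`. -/
def BCHCode {F : Type} [Field F] [Algebra (ZMod 2) F] (n : ℕ) (β : F) (J : Finset ℕ) :
    Submodule (ZMod 2) (Fin n → ZMod 2) where
  carrier := {c | ∀ j ∈ J, ∑ i : Fin n, c i • β ^ (j * (i : ℕ)) = 0}
  add_mem' := by
    intro a b ha hb j hj
    simp only [Set.mem_setOf_eq, Pi.add_apply, add_smul, Finset.sum_add_distrib] at *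
    rw [ha j hj, hb j hj, add_zero]
  zero_mem' := by
    intro j hj
    simp
  smul_mem' := by
    intro r c hc j hj
    simp only [Set.mem_setOf_eq, Pi.smul_apply, smul_assoc, ← Finset.smul_sum] at *
    rw [hc j hj, smul_zero]

/-- The (Euclidean) dual of a binary linear code. -/
def dualCode {N : ℕ} (C : Submodule (ZMod 2) (Fin N → ZMod 2)) :
    Submodule (ZMod 2) (Fin N → ZMod 2) where
  carrier := {b | ∀ c ∈ C, ∑ i, b i * c i = 0}
  add_mem' := by
    intro a b ha hb c hc
    simp only [Set.mem_setOf_eq, Pi.add_apply, add_mul, Finset.sum_add_distrib] at *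
    rw [ha c hc, hb c hc, add_zero]
  zero_mem' := by
    intro c hc
    simp
  smul_mem' := by
    intro r b hb c hc
    simp only [Set.mem_setOf_eq, Pi.smul_apply, smul_eq_mul, mul_assoc, ← Finset.mul_sum] at *
    rw [hb c hc, mul_zero]

/-- The linear map appending an overall parity-check coordinate. -/
def extendMap (N : ℕ) : (Fin N → ZMod 2) →ₗ[ZMod 2] (Fin (N + 1) → ZMod 2) where
  toFun c := fun j => if h : (j : ℕ) < N then c ⟨j, h⟩ else ∑ i, c i
  map_add' a b := by
    funext j
    by_cases h : (j : ℕ) < N <;> simp [h, Finset.sum_add_distrib]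
  map_smul' r c := by
    funext j
    by_cases h : (j : ℕ) < N <;> simp [h, Finset.mul_sum]

/-- The extended code of a binary linear code. -/
def extendedCode {N : ℕ} (C : Submodule (ZMod 2) (Fin N → ZMod 2)) :
    Submodule (ZMod 2) (Fin (N + 1) → ZMod 2) :=
  C.map (extendMap N)

/-- The minimum distance (= minimum nonzero Hamming weight) of a binary linear code. -/
noncomputable def minDist {N : ℕ} (C : Submodule (ZMod 2) (Fin N → ZMod 2)) : ℕ :=
  sInf {w | ∃ c ∈ C, c ≠ 0 ∧ hammingNorm c = w}

/-- The number of codewords of Hamming weight `w` in a binary linear code. -/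
noncomputable def weightCount {N : ℕ} (C : Submodule (ZMod 2) (Fin N → ZMod 2)) (w : ℕ) : ℕ :=
  Set.ncard {c : Fin N → ZMod 2 | c ∈ C ∧ hammingNorm c = w}

/-- The 2-cyclotomic coset of `i` modulo `n`. -/
def cycCoset (n i : ℕ) : Set ℕ := {x | ∃ j : ℕ, x = i * 2 ^ j % n}

/-- The coset leader (smallest element) of the 2-cyclotomic coset of `i` modulo `n`. -/
noncomputable def cosetLeader (n i : ℕ) : ℕ := sInf (cycCoset n i)

/-!
The dual of the extended code consists of the words `Tr(a x) + b`, where `x` runs over the point `0`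
(the parity check) and the `n` points `β ^ i`, which are the nonzero cubes. Up to the complement
given by `b`, the weight of such a word is an affine function of the cubic sum
`S(a) = ∑ x, (-1) ^ Tr(a x ^ 3)`. Differencing expresses `S(a) ^ 2` through the number of solutions
of `a u ^ 3 = 1`, so `|S(a)|` is `2 ^ (s + 1)` or `2 ^ s` according to whether `a` is a cube. The
sign is forced by `S(a) ≡ 1 (mod 3)`, since cubing is three-to-one on the nonzero elements.

The points being distinct, a nonzero codeword of the extended code has even weight greater than `2`.
Conversely, the balls of radius `2` are too large to be packed around the words of a code of the
same parameters, so its minimum distance is at most `4`.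
-/

section PowerSums

variable {F : Type*} [Field F] [Fintype F] {k n : ℕ}

theorem exists_isPrimitiveRoot_card_sub_one (F : Type*) [Field F] [Fintype F] :
    ∃ γ : F, IsPrimitiveRoot γ (Fintype.card F - 1) := by
  obtain ⟨g, hg⟩ := IsCyclic.exists_ofOrder_eq_natCard (α := Fˣ)
  refine ⟨g, IsPrimitiveRoot.coe_units_iff.mpr ?_⟩
  rw [← Nat.card_eq_fintype_card, ← Nat.card_units, ← hg]
  exact IsPrimitiveRoot.orderOf g

theorem exists_pow_eq_iff_pow_eq_one (hF : Fintype.card F = k * n + 1) {y : F} (hy : y ≠ 0) :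
    (∃ x, x ^ k = y) ↔ y ^ n = 1 := by
  have hkn : 0 < k * n := by have := Fintype.one_lt_card (α := F); omega
  have pow_kn (x : F) (hx : x ≠ 0) : x ^ (k * n) = 1 := by
    simpa [hF] using FiniteField.pow_card_sub_one_eq_one x hx
  constructor
  · rintro ⟨x, rfl⟩
    rw [← pow_mul, pow_kn x (ne_zero_pow (Nat.ne_zero_of_mul_ne_zero_left hkn.ne') hy)]
  · intro hyn
    obtain ⟨γ, hγ⟩ := exists_isPrimitiveRoot_card_sub_one F
    rw [hF, Nat.add_sub_cancel] at hγ
    have : NeZero (k * n) := ⟨hkn.ne'⟩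
    obtain ⟨m, -, rfl⟩ := hγ.eq_pow_of_pow_eq_one (pow_kn y hy)
    rw [← pow_mul, hγ.pow_eq_one_iff_dvd] at hyn
    obtain ⟨d, rfl⟩ := Nat.dvd_of_mul_dvd_mul_right (Nat.pos_of_mul_pos_left hkn) hyn
    exact ⟨γ ^ d, by rw [← pow_mul, mul_comm]⟩

variable [DecidableEq F]

theorem card_filter_pow_eq (hF : Fintype.card F = k * n + 1) {y : F} (hy : y ≠ 0) :
    #{x | x ^ k = y} = if y ^ n = 1 then k else 0 := by
  have hkn : 0 < k * n := by have := Fintype.one_lt_card (α := F); omega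
  obtain ⟨γ, hγ⟩ := exists_isPrimitiveRoot_card_sub_one F
  have hζ : IsPrimitiveRoot (γ ^ n) k :=
    hγ.pow (by omega) (by rw [hF, Nat.add_sub_cancel, mul_comm])
  have hroots : ({x | x ^ k = y} : Finset F) = ⟨_, hζ.nthRoots_nodup hy⟩ := by
    ext x
    simp [Polynomial.mem_nthRoots (Nat.pos_of_mul_pos_right hkn)]
  classical
  rw [hroots, card_mk, hζ.card_nthRoots]
  simp only [exists_pow_eq_iff_pow_eq_one hF hy]

theorem card_filter_mul_pow_eq_one (hF : Fintype.card F = k * n + 1) {a : F} (ha : a ≠ 0) :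
    #{x | a * x ^ k = 1} = if a ^ n = 1 then k else 0 := by
  simp_rw [mul_comm a, mul_eq_one_iff_eq_inv₀ ha]
  rw [card_filter_pow_eq hF (inv_ne_zero ha)]
  simp only [inv_pow, inv_eq_one]

variable {M : Type*} [AddCommMonoid M]

theorem sum_comp_pow (hF : Fintype.card F = k * n + 1) (f : F → M) :
    ∑ x : F, f (x ^ k) = f 0 + k • ∑ y with y ^ n = 1, f y := by
  have hkn : 0 < k * n := by have := Fintype.one_lt_card (α := F); omega
  have hk : k ≠ 0 := Nat.ne_zero_of_mul_ne_zero_left hkn.ne'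
  have hn : n ≠ 0 := Nat.ne_zero_of_mul_ne_zero_right hkn.ne'
  have fiber (y : F) : ∑ x with x ^ k = y, f y =
      (if y = 0 then f y else 0) + if y ^ n = 1 then k • f y else 0 := by
    rw [sum_const]
    rcases eq_or_ne y 0 with rfl | hy
    · simp [hk, hn, filter_eq']
    · simp [card_filter_pow_eq hF hy, hy, ite_smul]
  rw [← sum_fiberwise' univ (· ^ k) f, sum_congr rfl fun y _ => fiber y, sum_add_distrib,
    smul_sum, sum_filter]
  simp

theorem sum_filter_pow_eq_one {β : F} (hβ : orderOf β = n) (hn : n ≠ 0) (f : F → M) :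
    ∑ y with y ^ n = 1, f y = ∑ i : Fin n, f (β ^ (i : ℕ)) := by
  have : NeZero n := ⟨hn⟩
  have hprim : IsPrimitiveRoot β n := hβ ▸ IsPrimitiveRoot.orderOf β
  refine (sum_nbij (fun i : Fin n => β ^ (i : ℕ)) ?_ ?_ ?_ fun _ _ => rfl).symm
  · intro i _
    simp [pow_right_comm β, hprim.pow_eq_one]
  · intro i _ j _ hij
    exact Fin.ext (hprim.pow_inj i.2 j.2 hij)
  · intro y hy
    obtain ⟨i, hi, rfl⟩ := hprim.eq_pow_of_pow_eq_one (by simpa using hy)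
    exact ⟨⟨i, hi⟩, by simp, rfl⟩

theorem sum_ite_pow_eq_one (hF : Fintype.card F = k * n + 1) (u v w : M) :
    ∑ a : F, (if a = 0 then u else if a ^ n = 1 then v else w) =
      u + n • v + ((k - 1) * n) • w := by
  have hkn : 0 < k * n := by have := Fintype.one_lt_card (α := F); omega
  have hn : n ≠ 0 := Nat.ne_zero_of_mul_ne_zero_right hkn.ne'
  have zero_notMem : (0 : F) ∉ ({a | a ^ n = 1} : Finset F) := by simp [hn]
  have card_roots : #{a : F | a ^ n = 1} = n := by
    rw [card_filter_pow_eq (by rw [hF, mul_comm]) one_ne_zero, one_pow, if_pos rfl]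
  have card_rest : #(insert 0 ({a | a ^ n = 1} : Finset F))ᶜ = (k - 1) * n := by
    rw [card_compl, card_insert_of_notMem zero_notMem, card_roots, hF, Nat.sub_one_mul]
    omega
  rw [← sum_add_sum_compl (insert 0 ({a | a ^ n = 1} : Finset F)), sum_insert zero_notMem,
    if_pos rfl, sum_eq_card_nsmul (b := v), sum_eq_card_nsmul (b := w), card_roots, card_rest]
  · intro a ha
    simp_all
  · intro a ha
    rw [if_neg (ne_of_mem_of_not_mem ha zero_notMem), if_pos (by simpa using ha)]

end PowerSums

section CubicSum

variable {F R : Type*} [Field F] [Fintype F] [CommRing R]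

/-- The cubic Weil sum `∑ x, ψ (a x³)` of an additive character `ψ`. -/
def cubicSum (ψ : AddChar F R) (a : F) : R :=
  ∑ x, ψ (a * x ^ 3)

variable [CharP F 2] [IsDomain R]

/- Since `ψ` is Frobenius invariant, `ψ (a * u ^ 2 * x) = ψ ((a * u ^ 2 * x) ^ 2)`, so the summand
is `ψ` of a linear form in `x ^ 2`. -/
theorem sum_cube_difference [DecidableEq F] {ψ : AddChar F R} (hψ : ψ.IsPrimitive)
    (hfrob : ∀ x, ψ (x ^ 2) = ψ x) {a : F} (ha : a ≠ 0) (u : F) :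
    ∑ x, ψ (a * (x ^ 2 * u + x * u ^ 2)) =
      if u = 0 ∨ a * u ^ 3 = 1 then (Fintype.card F : R) else 0 := by
  have linearize (x : F) :
      ψ (a * (x ^ 2 * u + x * u ^ 2)) = ψ (x ^ 2 * (a * u * (1 + a * u ^ 3))) := by
    calc ψ (a * (x ^ 2 * u + x * u ^ 2))
        = ψ (a * x ^ 2 * u) * ψ ((a * x * u ^ 2) ^ 2) := by
          rw [hfrob, ← AddChar.map_add_eq_mul]; ring_nf
      _ = ψ (x ^ 2 * (a * u * (1 + a * u ^ 3))) := by
          rw [← AddChar.map_add_eq_mul]; ring_nf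
  have hzero : a * u * (1 + a * u ^ 3) = 0 ↔ u = 0 ∨ a * u ^ 3 = 1 := by
    simp [ha, CharTwo.add_eq_zero, eq_comm (a := (1 : F))]
  calc ∑ x, ψ (a * (x ^ 2 * u + x * u ^ 2))
      = ∑ x, ψ (x ^ 2 * (a * u * (1 + a * u ^ 3))) := sum_congr rfl fun x _ => linearize x
    _ = ∑ y, ψ (y * (a * u * (1 + a * u ^ 3))) :=
        (frobeniusEquiv F 2).bijective.sum_comp fun y => ψ (y * (a * u * (1 + a * u ^ 3)))
    _ = if u = 0 ∨ a * u ^ 3 = 1 then (Fintype.card F : R) else 0 := by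
        rw [AddChar.sum_mulShift _ hψ]
        simp only [hzero, Nat.cast_ite, Nat.cast_zero]

theorem cubicSum_sq [DecidableEq F] {ψ : AddChar F R} (hψ : ψ.IsPrimitive)
    (hfrob : ∀ x, ψ (x ^ 2) = ψ x) {a : F} (ha : a ≠ 0) :
    cubicSum ψ a ^ 2 = Fintype.card F * (1 + #{u | a * u ^ 3 = 1} * ψ 1) := by
  have cube_add (x u : F) : a * x ^ 3 + a * (x + u) ^ 3 =
      a * u ^ 3 + a * (x ^ 2 * u + x * u ^ 2) := by
    linear_combination (a * x ^ 3 + a * x ^ 2 * u + a * x * u ^ 2) * CharTwo.two_eq_zero (R := F)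
  have shift (x : F) : ∑ y, ψ (a * x ^ 3) * ψ (a * y ^ 3) =
      ∑ u, ψ (a * u ^ 3) * ψ (a * (x ^ 2 * u + x * u ^ 2)) := by
    rw [← Equiv.sum_comp (Equiv.addLeft x)]
    refine sum_congr rfl fun u _ => ?_
    rw [Equiv.coe_addLeft, ← AddChar.map_add_eq_mul, cube_add, AddChar.map_add_eq_mul]
  have hsupp : ({u | u = 0 ∨ a * u ^ 3 = 1} : Finset F) =
      insert 0 ({u | a * u ^ 3 = 1} : Finset F) := by
    ext; simp
  calc cubicSum ψ a ^ 2
      = ∑ u, ψ (a * u ^ 3) * ∑ x, ψ (a * (x ^ 2 * u + x * u ^ 2)) := by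
        rw [cubicSum, sq, sum_mul_sum, sum_congr rfl fun x _ => shift x, sum_comm]
        simp only [mul_sum]
    _ = (∑ u with u = 0 ∨ a * u ^ 3 = 1, ψ (a * u ^ 3)) * Fintype.card F := by
        simp only [sum_cube_difference hψ hfrob ha, mul_ite, ite_mul, mul_zero, zero_mul,
          sum_mul, sum_filter]
    _ = (1 + ∑ u with a * u ^ 3 = 1, ψ 1) * Fintype.card F := by
        rw [hsupp, sum_insert (by simp)]
        congr 2
        · simp
        · exact sum_congr rfl fun u hu => by rw [(mem_filter.mp hu).2]
    _ = Fintype.card F * (1 + #{u | a * u ^ 3 = 1} * ψ 1) := by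
        rw [sum_const, nsmul_eq_mul, mul_comm]

end CubicSum

section TraceChar

variable (F : Type*) [Field F] [Algebra (ZMod 2) F]

/-- The sign `b ↦ (-1)ᵇ` of a bit, as an additive character. -/
def signChar : AddChar (ZMod 2) ℤ :=
  AddChar.zmodChar 2 neg_one_sq

/-- The canonical additive character `x ↦ (-1)^Tr(x)` of a finite field of characteristic two. -/
noncomputable def traceChar : AddChar F ℤ :=
  signChar.compAddMonoidHom (Algebra.trace (ZMod 2) F).toAddMonoidHom

theorem signChar_one : signChar 1 = -1 :=
  rfl

variable {F}

theorem traceChar_apply (x : F) : traceChar F x = signChar (Algebra.trace (ZMod 2) F x) :=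
  rfl

theorem traceChar_isPrimitive [Finite F] : (traceChar F).IsPrimitive := by
  obtain ⟨y, hy⟩ := Algebra.trace_surjective (ZMod 2) F 1
  refine AddChar.IsPrimitive.of_ne_one (AddChar.ne_one_iff.mpr ⟨y, ?_⟩)
  rw [traceChar_apply, hy, signChar_one]
  decide

theorem traceChar_sq [Finite F] (x : F) : traceChar F (x ^ 2) = traceChar F x := by
  have h := Algebra.trace_eq_of_algEquiv (FiniteField.frobeniusAlgEquivOfAlgebraic (ZMod 2) F) x
  rw [FiniteField.coe_frobeniusAlgEquivOfAlgebraic, ZMod.card] at h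
  rw [traceChar_apply, h, traceChar_apply]

theorem traceChar_one_of_even_finrank (hF : Even (Module.finrank (ZMod 2) F)) :
    traceChar F 1 = 1 := by
  have trace_one : Algebra.trace (ZMod 2) F 1 = 0 := by
    rw [← map_one (algebraMap (ZMod 2) F), Algebra.trace_algebraMap, nsmul_one,
      ZMod.natCast_eq_zero_iff_even.mpr hF]
  rw [traceChar_apply, trace_one, AddChar.map_zero_eq_one]

theorem eq_of_sq_eq_sq_of_modEq_one {x y : ℤ} (hsq : x ^ 2 = y ^ 2) (hx : x ≡ 1 [ZMOD 3])
    (hy : y ≡ 1 [ZMOD 3]) : x = y := by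
  rcases sq_eq_sq_iff_eq_or_eq_neg.mp hsq with h | rfl
  · exact h
  · unfold Int.ModEq at hx hy
    omega

theorem neg_two_pow_modEq_one (s : ℕ) : (-2) ^ s ≡ 1 [ZMOD 3] := by
  simpa using (show (-2 : ℤ) ≡ 1 [ZMOD 3] by decide).pow s

variable [Fintype F]

theorem card_eq_four_pow {s : ℕ} (hF : Module.finrank (ZMod 2) F = 2 * s) :
    Fintype.card F = 4 ^ s := by
  rw [Module.card_eq_pow_finrank (K := ZMod 2), ZMod.card, hF, pow_mul, show 2 ^ 2 = 4 from rfl]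

variable {s n : ℕ}

theorem cubicSum_modEq_one (hF : Fintype.card F = 3 * n + 1) (a : F) :
    cubicSum (traceChar F) a ≡ 1 [ZMOD 3] := by
  classical
  rw [cubicSum, sum_comp_pow hF fun y => traceChar F (a * y), mul_zero, AddChar.map_zero_eq_one,
    nsmul_eq_mul]
  exact Int.modEq_iff_dvd.mpr ⟨-_, by push_cast; ring⟩

theorem cubicSum_traceChar [DecidableEq F] (hF : Module.finrank (ZMod 2) F = 2 * s)
    (hn : 3 * n + 1 = 4 ^ s) {a : F} (ha : a ≠ 0) :
    cubicSum (traceChar F) a = if a ^ n = 1 then -2 * (-2) ^ s else (-2) ^ s := by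
  have : CharP F 2 := charP_of_injective_algebraMap (algebraMap (ZMod 2) F).injective 2
  have hcard : Fintype.card F = 3 * n + 1 := by rw [card_eq_four_pow hF, hn]
  have hsq := cubicSum_sq traceChar_isPrimitive traceChar_sq ha
  rw [traceChar_one_of_even_finrank (hF ▸ even_two_mul s), card_filter_mul_pow_eq_one hcard ha,
    card_eq_four_pow hF] at hsq
  have four_pow : ((4 ^ s : ℕ) : ℤ) = ((-2) ^ s) ^ 2 := by rw [pow_right_comm]; norm_num
  rw [four_pow] at hsq
  have hmod := neg_two_pow_modEq_one s
  have hS := cubicSum_modEq_one hcard a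
  split_ifs at hsq ⊢
  · refine eq_of_sq_eq_sq_of_modEq_one ?_ hS ?_
    · rw [hsq]; push_cast; ring
    · simpa [pow_succ'] using neg_two_pow_modEq_one (s + 1)
  · exact eq_of_sq_eq_sq_of_modEq_one (by rw [hsq]; simp) hS hmod

end TraceChar

section BinaryWords

theorem zmod_two_eq_one_of_ne_zero {b : ZMod 2} (hb : b ≠ 0) : b = 1 :=
  Fin.eq_one_of_ne_zero b hb

variable {ι : Type*} [Fintype ι]

theorem sum_eq_natCast_hammingNorm (c : ι → ZMod 2) : ∑ i, c i = (hammingNorm c : ZMod 2) := by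
  rw [hammingNorm, natCast_card_filter]
  refine sum_congr rfl fun i _ => ?_
  split_ifs with hi
  · exact zmod_two_eq_one_of_ne_zero hi
  · exact not_not.mp hi

theorem hammingNorm_add_one_add_hammingNorm (c : ι → ZMod 2) :
    hammingNorm (c + 1) + hammingNorm c = Fintype.card ι := by
  have flip (b : ZMod 2) : b + 1 ≠ 0 ↔ ¬ b ≠ 0 := by decide +revert
  simp only [hammingNorm, Pi.add_apply, Pi.one_apply, flip]
  rw [add_comm, card_filter_add_card_filter_not, card_univ]

theorem card_hammingNorm_eq [DecidableEq ι] (w : ℕ) :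
    #{x : ι → ZMod 2 | hammingNorm x = w} = (Fintype.card ι).choose w := by
  rw [← card_univ, ← card_powersetCard]
  refine card_nbij' (fun x => ({i | x i ≠ 0} : Finset ι)) (fun t i => if i ∈ t then 1 else 0)
    ?_ ?_ ?_ ?_
  · intro x hx
    simpa [hammingNorm, mem_powersetCard] using hx
  · intro t ht
    simpa [hammingNorm, mem_powersetCard] using ht
  · intro x _
    funext i
    by_cases hi : x i = 0
    · simp [hi]
    · simp [zmod_two_eq_one_of_ne_zero hi]
  · intro t _
    ext i
    simp

/- The sum of the entries makes the weight even, and a word of weight two would identify two of the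
points. -/
theorem four_le_hammingNorm {V : Type*} [AddCommGroup V] [Module (ZMod 2) V] {x : ι → V}
    (hx : Function.Injective x) {c : ι → ZMod 2} (hc : c ≠ 0) (hsum : ∑ i, c i = 0)
    (hpoints : ∑ i, c i • x i = 0) : 4 ≤ hammingNorm c := by
  have heven : Even (hammingNorm c) := by
    rw [← ZMod.natCast_eq_zero_iff_even, ← sum_eq_natCast_hammingNorm, hsum]
  have hpos : 0 < hammingNorm c := hammingNorm_pos_iff.mpr hc
  have hne_two : hammingNorm c ≠ 2 := by
    classical
    intro h
    obtain ⟨i, j, hij, hsupp⟩ := card_eq_two.mp h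
    have hsub : ∑ i, c i • x i = ∑ i with c i ≠ 0, x i := by
      rw [sum_filter]
      refine sum_congr rfl fun i _ => ?_
      split_ifs with hi
      · rw [zmod_two_eq_one_of_ne_zero hi, one_smul]
      · rw [not_not.mp hi, zero_smul]
    rw [hsub, hsupp, sum_pair hij] at hpoints
    rw [← ZModModule.sub_eq_add, sub_eq_zero] at hpoints
    exact hij (hx hpoints)
  obtain ⟨m, hm⟩ := heven
  omega

end BinaryWords

section BinaryCodes

variable {N : ℕ} {C : Submodule (ZMod 2) (Fin N → ZMod 2)}

theorem mem_dualCode {b : Fin N → ZMod 2} : b ∈ dualCode C ↔ ∀ c ∈ C, ∑ i, b i * c i = 0 :=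
  Iff.rfl

theorem dotProductBilin_isRefl {ι R : Type*} [Fintype ι] [CommRing R] :
    LinearMap.BilinForm.IsRefl (dotProductBilin R R : LinearMap.BilinForm R (ι → R)) :=
  fun x y h => (dotProduct_comm y x).trans h

theorem dotProductBilin_nondegenerate {ι R : Type*} [Fintype ι] [CommRing R] :
    (dotProductBilin R R : LinearMap.BilinForm R (ι → R)).Nondegenerate :=
  ⟨dotProduct_eq_zero, fun y hy => dotProduct_eq_zero y fun x => (dotProduct_comm y x).trans (hy x)⟩

theorem dualCode_eq_orthogonal :
    dualCode C = LinearMap.BilinForm.orthogonal (dotProductBilin (ZMod 2) (ZMod 2)) C := by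
  ext b
  simp only [mem_dualCode, LinearMap.BilinForm.mem_orthogonal_iff, mul_comm (b _)]
  rfl

theorem dualCode_dualCode : dualCode (dualCode C) = C := by
  rw [dualCode_eq_orthogonal, dualCode_eq_orthogonal,
    LinearMap.BilinForm.orthogonal_orthogonal dotProductBilin_nondegenerate dotProductBilin_isRefl]

theorem finrank_dualCode :
    Module.finrank (ZMod 2) (dualCode C) = N - Module.finrank (ZMod 2) C := by
  rw [dualCode_eq_orthogonal,
    LinearMap.BilinForm.finrank_orthogonal dotProductBilin_nondegenerate,
    Module.finrank_fin_fun]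

theorem extendMap_eq_snoc (c : Fin N → ZMod 2) :
    extendMap N c = Fin.snoc (α := fun _ => ZMod 2) c (∑ i, c i) :=
  rfl

theorem mem_extendedCode {c : Fin (N + 1) → ZMod 2} :
    c ∈ extendedCode C ↔ Fin.init c ∈ C ∧ ∑ i, c i = 0 := by
  constructor
  · rintro ⟨d, hd, rfl⟩
    rw [extendMap_eq_snoc, Fin.init_snoc, Fin.sum_univ_castSucc]
    simpa [CharTwo.add_self_eq_zero] using hd
  · rintro ⟨hmem, hsum⟩
    have hlast : ∑ i, Fin.init c i = c (Fin.last N) := by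
      rwa [Fin.sum_univ_castSucc, CharTwo.add_eq_zero] at hsum
    refine ⟨Fin.init c, hmem, ?_⟩
    rw [extendMap_eq_snoc, hlast, Fin.snoc_init_self]

theorem minDist_le_hammingNorm {c : Fin N → ZMod 2} (hc : c ∈ C) (hc0 : c ≠ 0) :
    minDist C ≤ hammingNorm c :=
  Nat.sInf_le ⟨c, hc, hc0, rfl⟩

theorem le_minDist (hC : C ≠ ⊥) {d : ℕ} (h : ∀ c ∈ C, c ≠ 0 → d ≤ hammingNorm c) :
    d ≤ minDist C := by
  obtain ⟨c, hc, hc0⟩ := Submodule.exists_mem_ne_zero_of_ne_bot hC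
  refine le_csInf ⟨_, c, hc, hc0, rfl⟩ ?_
  rintro _ ⟨b, hb, hb0, rfl⟩
  exact h b hb hb0

/- Two words of the ball of radius `t` must share a coset of `C`. -/
theorem minDist_le_two_mul {t : ℕ}
    (h : 2 ^ (N - Module.finrank (ZMod 2) C) < #{x : Fin N → ZMod 2 | hammingNorm x ≤ t}) :
    minDist C ≤ 2 * t := by
  have : Fintype ((Fin N → ZMod 2) ⧸ C) := Fintype.ofFinite _
  have card_quotient : #(univ : Finset ((Fin N → ZMod 2) ⧸ C)) =
      2 ^ (N - Module.finrank (ZMod 2) C) := by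
    rw [card_univ, Module.card_eq_pow_finrank (K := ZMod 2), ZMod.card, Submodule.finrank_quotient,
      Module.finrank_fin_fun]
  obtain ⟨x, hx, y, hy, hxy, hcoset⟩ := exists_ne_map_eq_of_card_lt_of_maps_to
    (card_quotient.trans_lt h) (f := C.mkQ) fun _ _ => mem_coe.mpr (mem_univ _)
  rw [mem_filter_univ] at hx hy
  have hmem : -x + y ∈ C := (QuotientAddGroup.eq (s := C.toAddSubgroup)).mp hcoset
  calc minDist C ≤ hammingNorm (-x + y) :=
        minDist_le_hammingNorm hmem fun h0 => hxy (neg_add_eq_zero.mp h0)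
    _ = hammingDist x y := (hammingDist_eq_hammingNorm x y).symm
    _ ≤ hammingDist x 0 + hammingDist 0 y := hammingDist_triangle x 0 y
    _ ≤ 2 * t := by rw [hammingDist_zero_right, hammingDist_zero_left]; omega

end BinaryCodes

section AffineTrace

/-- The map sending `(a, b)` to the word whose entry at `j` is `Tr(a x_j) + b`. Its range is the
affine trace code at the points `x`, which for suitable `x` is the dual of the extended BCH code. -/
noncomputable def affineTrace {F ι : Type*} [Field F] [Algebra (ZMod 2) F] (x : ι → F) :
    F × ZMod 2 →ₗ[ZMod 2] ι → ZMod 2 :=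
  LinearMap.pi fun j => ((Algebra.traceForm (ZMod 2) F).flip (x j)).coprod LinearMap.id

/-- The points `1, β, …, β ^ (n - 1), 0`, the last one belonging to the overall parity check. -/
def bchPoints {F : Type*} [Field F] (n : ℕ) (β : F) : Fin (n + 1) → F :=
  Fin.snoc (fun i : Fin n => β ^ (i : ℕ)) 0

theorem bchPoints_castSucc {F : Type*} [Field F] {n : ℕ} (β : F) (i : Fin n) :
    bchPoints n β i.castSucc = β ^ (i : ℕ) :=
  Fin.snoc_castSucc (α := fun _ => F) _ _ i

theorem bchPoints_last {F : Type*} [Field F] {n : ℕ} (β : F) : bchPoints n β (Fin.last n) = 0 :=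
  Fin.snoc_last (α := fun _ => F) _ _

theorem bchPoints_injective {F : Type*} [Field F] {n : ℕ} {β : F} (hβ : orderOf β = n) :
    Function.Injective (bchPoints n β) := by
  have hprim : IsPrimitiveRoot β n := hβ ▸ IsPrimitiveRoot.orderOf β
  refine Fin.snoc_injective_iff.mpr ⟨fun i j hij => Fin.ext (hprim.pow_inj i.2 j.2 hij), ?_⟩
  rintro ⟨i, hi⟩
  exact pow_ne_zero i.1 (hprim.isUnit (Nat.ne_zero_of_lt i.2)).ne_zero hi

variable {F : Type*} [Field F] [Algebra (ZMod 2) F] {ι : Type*}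

theorem affineTrace_apply (x : ι → F) (p : F × ZMod 2) (j : ι) :
    affineTrace x p j = Algebra.trace (ZMod 2) F (p.1 * x j) + p.2 :=
  rfl

theorem affineTrace_one_right (x : ι → F) (a : F) :
    affineTrace x (a, 1) = affineTrace x (a, 0) + 1 := by
  funext j
  simp [affineTrace_apply]

theorem hammingNorm_affineTrace_one_right [Fintype ι] (x : ι → F) (a : F) :
    hammingNorm (affineTrace x (a, 1)) =
      Fintype.card ι - hammingNorm (affineTrace x (a, 0)) := by
  rw [affineTrace_one_right, ← hammingNorm_add_one_add_hammingNorm (affineTrace x (a, 0)),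
    Nat.add_sub_cancel]

theorem sum_mul_affineTrace [Fintype ι] (x : ι → F) (c : ι → ZMod 2) (p : F × ZMod 2) :
    ∑ j, c j * affineTrace x p j =
      Algebra.trace (ZMod 2) F (p.1 * ∑ j, c j • x j) + p.2 * ∑ j, c j := by
  simp only [affineTrace_apply, mul_add, sum_add_distrib, mul_sum, map_sum, mul_smul_comm,
    map_smul, smul_eq_mul, mul_comm p.2, sum_mul]

theorem mem_dualCode_range_affineTrace [Finite F] {N : ℕ} {x : Fin N → F} {c : Fin N → ZMod 2} :
    c ∈ dualCode (LinearMap.range (affineTrace x)) ↔ ∑ j, c j • x j = 0 ∧ ∑ j, c j = 0 := by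
  simp only [mem_dualCode, LinearMap.mem_range, forall_exists_index, forall_apply_eq_imp_iff,
    sum_mul_affineTrace]
  constructor
  · intro h
    have hpoints (a : F) : Algebra.trace (ZMod 2) F (a * ∑ j, c j • x j) = 0 := by
      simpa using h (a, 0)
    exact ⟨(traceForm_nondegenerate (ZMod 2) F).2 _ hpoints, by simpa using h (0, 1)⟩
  · rintro ⟨hpoints, hsum⟩ p
    rw [hpoints, hsum, mul_zero, mul_zero, map_zero, add_zero]

theorem affineTrace_injective {x : ι → F} [Fintype ι] {j : ι} (hj : x j = 0)
    (hx : ∀ a ≠ 0, hammingNorm (affineTrace x (a, 0)) ≠ 0) :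
    Function.Injective (affineTrace x) := by
  refine (injective_iff_map_eq_zero _).mpr ?_
  rintro ⟨a, b⟩ hab
  obtain rfl : b = 0 := by simpa [affineTrace_apply, hj] using congrFun hab j
  by_contra hne
  exact hx a (by simpa using hne) (hammingNorm_eq_zero.mpr hab)

theorem weightCount_range_eq_card {V : Type*} [AddCommGroup V] [Module (ZMod 2) V] [Fintype V]
    {N : ℕ} {f : V →ₗ[ZMod 2] Fin N → ZMod 2} (hf : Function.Injective f) (w : ℕ) :
    weightCount (LinearMap.range f) w = #{p | hammingNorm (f p) = w} := by
  have himage : {c | c ∈ LinearMap.range f ∧ hammingNorm c = w} =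
      f '' (({p | hammingNorm (f p) = w} : Finset V) : Set V) := by
    ext c
    simp only [LinearMap.mem_range, coe_filter, mem_univ, true_and, Set.mem_image]
    constructor
    · rintro ⟨⟨p, rfl⟩, hp⟩
      exact ⟨p, hp, rfl⟩
    · rintro ⟨p, hp, rfl⟩
      exact ⟨⟨p, rfl⟩, hp⟩
  rw [weightCount, himage, Set.ncard_image_of_injective _ hf, Set.ncard_coe_finset]

theorem weightCount_range_affineTrace [Fintype F] {N : ℕ} {x : Fin N → F}
    (hx : Function.Injective (affineTrace x)) (w : ℕ) :
    weightCount (LinearMap.range (affineTrace x)) w =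
      ∑ a, ((if hammingNorm (affineTrace x (a, 0)) = w then 1 else 0) +
        if N - hammingNorm (affineTrace x (a, 0)) = w then 1 else 0) := by
  rw [weightCount_range_eq_card hx, card_filter, Fintype.sum_prod_type]
  refine sum_congr rfl fun a _ => ?_
  have hcompl := hammingNorm_affineTrace_one_right x a
  rw [Fintype.card_fin] at hcompl
  rw [← hcompl]
  exact Fin.sum_univ_two _

end AffineTrace

section ExtendedBCHCode

variable {F : Type} [Field F] [Algebra (ZMod 2) F] {s n : ℕ} {β : F}

theorem mem_BCHCode_one {c : Fin n → ZMod 2} :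
    c ∈ BCHCode n β {1} ↔ ∑ i, c i • β ^ (i : ℕ) = 0 := by
  change (∀ j ∈ ({1} : Finset ℕ), ∑ i : Fin n, c i • β ^ (j * (i : ℕ)) = 0) ↔ _
  simp

theorem extendedCode_BCHCode_one [Finite F] : extendedCode (BCHCode n β {1}) =
    dualCode (LinearMap.range (affineTrace (bchPoints n β))) := by
  ext c
  rw [mem_extendedCode, mem_BCHCode_one, mem_dualCode_range_affineTrace,
    Fin.sum_univ_castSucc (f := fun j => c j • bchPoints n β j)]
  simp only [bchPoints_castSucc, bchPoints_last, smul_zero, add_zero, Fin.init]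

end ExtendedBCHCode

section Weights

theorem sum_signChar {ι : Type*} [Fintype ι] (c : ι → ZMod 2) :
    ∑ i, signChar (c i) = Fintype.card ι - 2 * hammingNorm c := by
  have signChar_eq (b : ZMod 2) : signChar b = 1 - 2 * if b ≠ 0 then 1 else 0 := by
    split_ifs with hb
    · rw [zmod_two_eq_one_of_ne_zero hb, signChar_one]
      norm_num
    · rw [not_not.mp hb, AddChar.map_zero_eq_one]
      norm_num
  simp only [signChar_eq, sum_sub_distrib, ← mul_sum, sum_const, card_univ, nsmul_one,
    hammingNorm, natCast_card_filter]

variable {F : Type*} [Field F] [Algebra (ZMod 2) F] {s n w1 w2 : ℕ} {β : F}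

theorem six_mul_hammingNorm_affineTrace [Fintype F] (hF : Fintype.card F = 3 * n + 1)
    (hβ : orderOf β = n) (a : F) :
    (6 * hammingNorm (affineTrace (bchPoints n β) (a, 0)) : ℤ) =
      3 * n + 1 - cubicSum (traceChar F) a := by
  classical
  have hn : n ≠ 0 := by
    have := Fintype.one_lt_card (α := F)
    omega
  have hweight : 1 + ∑ i : Fin n, traceChar F (a * β ^ (i : ℕ)) =
      n + 1 - 2 * hammingNorm (affineTrace (bchPoints n β) (a, 0)) := by
    have h := sum_signChar (affineTrace (bchPoints n β) (a, 0))
    simpa [Fin.sum_univ_castSucc, affineTrace_apply, bchPoints_castSucc, bchPoints_last,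
      traceChar_apply, add_comm] using h
  have hcubic : cubicSum (traceChar F) a =
      1 + 3 * ∑ i : Fin n, traceChar F (a * β ^ (i : ℕ)) := by
    rw [cubicSum, sum_comp_pow hF fun y => traceChar F (a * y), mul_zero,
      AddChar.map_zero_eq_one, sum_filter_pow_eq_one hβ hn, nsmul_eq_mul, Nat.cast_ofNat]
  linarith

theorem hammingNorm_affineTrace_bchPoints [Finite F] [DecidableEq F]
    (hF : Module.finrank (ZMod 2) F = 2 * s) (hn : 3 * n + 1 = 4 ^ s) (hβ : orderOf β = n)
    (hw1 : (6 * w1 : ℤ) = 4 ^ s + 2 * (-2) ^ s) (hw2 : (6 * w2 : ℤ) = 4 ^ s - (-2) ^ s) (a : F) :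
    hammingNorm (affineTrace (bchPoints n β) (a, 0)) =
      if a = 0 then 0 else if a ^ n = 1 then w1 else w2 := by
  cases nonempty_fintype F
  have hcard : Fintype.card F = 3 * n + 1 := by rw [card_eq_four_pow hF, hn]
  have hweight := six_mul_hammingNorm_affineTrace hcard hβ a
  have hn' : (3 * n + 1 : ℤ) = 4 ^ s := mod_cast hn
  split_ifs with ha hroot
  · rw [ha, ← Prod.zero_eq_mk, map_zero, hammingNorm_zero]
  · rw [cubicSum_traceChar hF hn ha, if_pos hroot] at hweight
    linarith
  · rw [cubicSum_traceChar hF hn ha, if_neg hroot] at hweight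
    linarith

/-- The six weights `0, w₁, w₂, n + 1 - w₁, n + 1 - w₂, n + 1` of the dual of the extended code. -/
def dualWeight (n w1 w2 : ℕ) : Fin 6 → ℕ :=
  ![0, w1, w2, n + 1 - w1, n + 1 - w2, n + 1]

/-- The number of codewords of each weight, in the order of `dualWeight`. -/
def dualMultiplicity (n : ℕ) : Fin 6 → ℕ :=
  ![1, n, 2 * n, n, 2 * n, 1]

theorem dualWeight_injective (hs : 3 ≤ s) (hn : 3 * n + 1 = 4 ^ s)
    (hw1 : (6 * w1 : ℤ) = 4 ^ s + 2 * (-2) ^ s) (hw2 : (6 * w2 : ℤ) = 4 ^ s - (-2) ^ s) :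
    Function.Injective (dualWeight n w1 w2) := by
  rw [← List.nodup_ofFn]
  have hn' : (3 * n + 1 : ℤ) = 4 ^ s := mod_cast hn
  have hsq : (4 : ℤ) ^ s = |(-2) ^ s| * |(-2) ^ s| := by
    rw [abs_mul_abs_self, ← mul_pow]
    norm_num
  have habs : 8 ≤ |(-2 : ℤ) ^ s| := by
    calc (8 : ℤ) = 2 ^ 3 := by norm_num
      _ ≤ 2 ^ s := pow_le_pow_right₀ one_le_two hs
      _ = |(-2) ^ s| := by rw [abs_pow, abs_neg, abs_two]
  have hlarge : 8 * |(-2 : ℤ) ^ s| ≤ 4 ^ s := by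
    rw [hsq]
    gcongr
  generalize (-2 : ℤ) ^ s = e at *
  generalize (4 : ℤ) ^ s = q at *
  change [0, w1, w2, n + 1 - w1, n + 1 - w2, n + 1].Nodup
  simp only [List.nodup_cons, List.mem_cons, List.not_mem_nil, List.nodup_nil, or_false, and_true,
    not_false_eq_true]
  rcases abs_cases e with ⟨he, -⟩ | ⟨he, -⟩ <;> rw [he] at habs hlarge <;> omega

theorem weightCount_affineTrace_bchPoints [Finite F]
    (hF : Module.finrank (ZMod 2) F = 2 * s) (hn : 3 * n + 1 = 4 ^ s) (hβ : orderOf β = n)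
    (hw1 : (6 * w1 : ℤ) = 4 ^ s + 2 * (-2) ^ s) (hw2 : (6 * w2 : ℤ) = 4 ^ s - (-2) ^ s)
    (hinj : Function.Injective (affineTrace (bchPoints n β))) (w : ℕ) :
    weightCount (LinearMap.range (affineTrace (bchPoints n β))) w =
      ∑ i, if dualWeight n w1 w2 i = w then dualMultiplicity n i else 0 := by
  have := Classical.decEq F
  cases nonempty_fintype F
  have hcard : Fintype.card F = 3 * n + 1 := by rw [card_eq_four_pow hF, hn]
  let pairCount (v : ℕ) : ℕ := (if v = w then 1 else 0) + if n + 1 - v = w then 1 else 0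
  calc weightCount (LinearMap.range (affineTrace (bchPoints n β))) w
      = ∑ a, pairCount (hammingNorm (affineTrace (bchPoints n β) (a, 0))) :=
        weightCount_range_affineTrace hinj w
    _ = ∑ a : F, if a = 0 then pairCount 0
          else if a ^ n = 1 then pairCount w1 else pairCount w2 := by
        simp only [hammingNorm_affineTrace_bchPoints hF hn hβ hw1 hw2, apply_ite pairCount]
    _ = pairCount 0 + n * pairCount w1 + 2 * n * pairCount w2 := by
        rw [sum_ite_pow_eq_one hcard]
        simp only [nsmul_eq_mul, Nat.cast_id]
    _ = ∑ i, if dualWeight n w1 w2 i = w then dualMultiplicity n i else 0 := by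
        rw [Fin.sum_univ_six]
        change _ = (if 0 = w then 1 else 0) + (if w1 = w then n else 0) +
          (if w2 = w then 2 * n else 0) + (if n + 1 - w1 = w then n else 0) +
          (if n + 1 - w2 = w then 2 * n else 0) + if n + 1 = w then 1 else 0
        simp only [pairCount, Nat.sub_zero, mul_add, mul_ite, mul_one, mul_zero]
        ring

theorem affineTrace_bchPoints_injective [Finite F] (hs : 3 ≤ s)
    (hF : Module.finrank (ZMod 2) F = 2 * s) (hn : 3 * n + 1 = 4 ^ s) (hβ : orderOf β = n)
    (hw1 : (6 * w1 : ℤ) = 4 ^ s + 2 * (-2) ^ s) (hw2 : (6 * w2 : ℤ) = 4 ^ s - (-2) ^ s) :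
    Function.Injective (affineTrace (bchPoints n β)) := by
  classical
  have hweight := dualWeight_injective hs hn hw1 hw2
  refine affineTrace_injective (bchPoints_last β) fun a ha => ?_
  rw [hammingNorm_affineTrace_bchPoints hF hn hβ hw1 hw2, if_neg ha]
  split_ifs
  · exact hweight.ne (show (1 : Fin 6) ≠ 0 by decide)
  · exact hweight.ne (show (2 : Fin 6) ≠ 0 by decide)

end Weights

section Parameters

variable {s n : ℕ}

theorem three_mul_four_pow_sub_one_div_three (s : ℕ) : 3 * ((4 ^ s - 1) / 3) + 1 = 4 ^ s := by
  have hdvd : 3 ∣ 4 ^ s - 1 := by simpa using Nat.sub_dvd_pow_sub_pow 4 1 s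
  rw [Nat.mul_div_cancel' hdvd, Nat.sub_add_cancel (Nat.one_le_pow' s 3)]

theorem eight_mul_succ_le_four_pow (hs : 3 ≤ s) : 8 * (s + 1) ≤ 4 ^ s :=
  calc 8 * (s + 1) ≤ 2 ^ s * 2 ^ s :=
        Nat.mul_le_mul (Nat.pow_le_pow_right two_pos hs) Nat.lt_two_pow_self
    _ = 4 ^ s := (mul_pow 2 2 s).symm

theorem four_pow_eq_two_mul (hs : s ≠ 0) : (4 : ℤ) ^ s = 2 * 2 ^ (2 * s - 1) := by
  rw [mul_pow_sub_one (by omega), pow_mul]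
  norm_num

theorem six_mul_eq_four_pow_add {w : ℕ} (hs : s ≠ 0)
    (hw : (3 * w : ℤ) = 2 ^ (2 * s - 1) + (-1) ^ s * 2 ^ s) :
    (6 * w : ℤ) = 4 ^ s + 2 * (-2) ^ s := by
  rw [neg_pow, four_pow_eq_two_mul hs]
  linarith

theorem six_mul_eq_four_pow_sub {w : ℕ} (hs : s ≠ 0)
    (hw : (3 * w : ℤ) = 2 ^ (2 * s - 1) - (-1) ^ s * 2 ^ (s - 1)) :
    (6 * w : ℤ) = 4 ^ s - (-2) ^ s := by
  rw [neg_pow, four_pow_eq_two_mul hs, ← mul_pow_sub_one hs (2 : ℤ)]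
  linarith

theorem two_pow_lt_card_hammingNorm_le_two (hs : 3 ≤ s) (hn : 3 * n + 1 = 4 ^ s) :
    2 ^ (2 * s + 1) < #{x : Fin (n + 1) → ZMod 2 | hammingNorm x ≤ 2} := by
  have hn21 : 21 ≤ n := by
    have : 4 ^ 3 ≤ 4 ^ s := Nat.pow_le_pow_right (by norm_num) hs
    omega
  calc 2 ^ (2 * s + 1) = 6 * n + 2 := by
        rw [pow_succ, pow_mul, show 2 ^ 2 = 4 from rfl, ← hn]
        ring
    _ < (n + 1).choose 2 := by
        rw [Nat.choose_two_right, Nat.add_sub_cancel, ← Nat.succ_le_iff,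
          Nat.le_div_iff_mul_le two_pos]
        nlinarith
    _ = #{x : Fin (n + 1) → ZMod 2 | hammingNorm x = 2} := by
        rw [card_hammingNorm_eq, Fintype.card_fin]
    _ ≤ #{x : Fin (n + 1) → ZMod 2 | hammingNorm x ≤ 2} :=
        card_le_card (monotone_filter_right _ fun _ _ h => h.le)

theorem minDist_le_four (hs : 3 ≤ s) (hn : 3 * n + 1 = 4 ^ s)
    {D : Submodule (ZMod 2) (Fin (n + 1) → ZMod 2)}
    (hD : Module.finrank (ZMod 2) D = n - 2 * s) : minDist D ≤ 4 := by
  refine minDist_le_two_mul (t := 2) ?_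
  have hlarge := eight_mul_succ_le_four_pow hs
  rw [hD, show n + 1 - (n - 2 * s) = 2 * s + 1 by omega]
  exact two_pow_lt_card_hammingNorm_le_two hs hn

variable {F : Type} [Field F] [Algebra (ZMod 2) F] {β : F}

theorem four_le_minDist_extendedCode [Finite F] (hβ : orderOf β = n)
    (hne : extendedCode (BCHCode n β {1}) ≠ ⊥) : 4 ≤ minDist (extendedCode (BCHCode n β {1})) := by
  refine le_minDist hne fun c hc hc0 => ?_
  rw [extendedCode_BCHCode_one, mem_dualCode_range_affineTrace] at hc
  exact four_le_hammingNorm (bchPoints_injective hβ) hc0 hc.2 hc.1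

theorem stmt_16_general (hs : 3 ≤ s) (hF : Module.finrank (ZMod 2) F = 2 * s)
    (hn : n = (4 ^ s - 1) / 3) (hβ : orderOf β = n) {w1 w2 : ℕ}
    (hw1 : (3 * w1 : ℤ) = 2 ^ (2 * s - 1) + (-1) ^ s * 2 ^ s)
    (hw2 : (3 * w2 : ℤ) = 2 ^ (2 * s - 1) - (-1) ^ s * 2 ^ (s - 1))
    {E : Submodule (ZMod 2) (Fin (n + 1) → ZMod 2)}
    (hE : E = dualCode (extendedCode (BCHCode n β {1}))) :
    Module.finrank (ZMod 2) (extendedCode (BCHCode n β {1})) = n - 2 * s ∧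
    minDist (extendedCode (BCHCode n β {1})) = 4 ∧
    (∀ D : Submodule (ZMod 2) (Fin (n + 1) → ZMod 2),
      Module.finrank (ZMod 2) D = n - 2 * s → minDist D ≤ 4) ∧
    Module.finrank (ZMod 2) E = 2 * s + 1 ∧
    weightCount E 0 = 1 ∧
    weightCount E w1 = n ∧
    weightCount E w2 = 2 * n ∧
    weightCount E (n + 1 - w1) = n ∧
    weightCount E (n + 1 - w2) = 2 * n ∧
    weightCount E (n + 1) = 1 ∧
    ∀ w : ℕ, w ≠ 0 → w ≠ w1 → w ≠ w2 → w ≠ n + 1 - w1 → w ≠ n + 1 - w2 →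
      w ≠ n + 1 → weightCount E w = 0 := by
  have : Module.Finite (ZMod 2) F := Module.finite_of_finrank_pos (by omega)
  have : Finite F := Module.finite_of_finite (ZMod 2)
  have hn4 : 3 * n + 1 = 4 ^ s := hn ▸ three_mul_four_pow_sub_one_div_three s
  have h6w1 := six_mul_eq_four_pow_add (by omega) hw1
  have h6w2 := six_mul_eq_four_pow_sub (by omega) hw2
  have hinj := affineTrace_bchPoints_injective hs hF hn4 hβ h6w1 h6w2
  have hErange : E = LinearMap.range (affineTrace (bchPoints n β)) := by
    rw [hE, extendedCode_BCHCode_one, dualCode_dualCode]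
  have hfinrankE : Module.finrank (ZMod 2) E = 2 * s + 1 := by
    rw [hErange, LinearMap.finrank_range_of_inj hinj, Module.finrank_prod, hF,
      Module.finrank_self]
  have hfinrank : Module.finrank (ZMod 2) (extendedCode (BCHCode n β {1})) = n - 2 * s := by
    rw [← dualCode_dualCode (C := extendedCode (BCHCode n β {1})), ← hE, finrank_dualCode,
      hfinrankE, Nat.add_sub_add_right]
  have hne : extendedCode (BCHCode n β {1}) ≠ ⊥ := by
    have hlarge := eight_mul_succ_le_four_pow hs
    exact Submodule.one_le_finrank_iff.mp (by omega)
  have hcount := weightCount_affineTrace_bchPoints hF hn4 hβ h6w1 h6w2 hinj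
  rw [← hErange] at hcount
  have hweight := dualWeight_injective hs hn4 h6w1 h6w2
  have hvalue (i : Fin 6) : weightCount E (dualWeight n w1 w2 i) = dualMultiplicity n i := by
    simp only [hcount, hweight.eq_iff, sum_ite_eq', mem_univ, if_true]
  refine ⟨hfinrank, (minDist_le_four hs hn4 hfinrank).antisymm
    (four_le_minDist_extendedCode hβ hne), fun D => minDist_le_four hs hn4, hfinrankE,
    hvalue 0, hvalue 1, hvalue 2, hvalue 3, hvalue 4, hvalue 5, fun w h0 h1 h2 h3 h4 h5 => ?_⟩
  rw [hcount]
  refine sum_eq_zero fun i _ => if_neg ?_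
  fin_cases i
  exacts [h0.symm, h1.symm, h2.symm, h3.symm, h4.symm, h5.symm]

end Parameters

theorem stmt_16 (s : ℕ) (hs : 4 ≤ s) (n : ℕ) (hn : n = (4 ^ s - 1) / 3)
    (α : GaloisField 2 (2 * s)) (hα : orderOf α = 2 ^ (2 * s) - 1)
    (β : GaloisField 2 (2 * s)) (hβ : β = α ^ (3)) (w1 w2 : ℕ)
    (hw1 : (3 * w1 : ℤ) = 2 ^ (2 * s - 1) + (-1) ^ s * 2 ^ s)
    (hw2 : (3 * w2 : ℤ) = 2 ^ (2 * s - 1) - (-1) ^ s * 2 ^ (s - 1))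
    (E : Submodule (ZMod 2) (Fin (n + 1) → ZMod 2))
    (hE : E = dualCode (extendedCode (BCHCode n β {1}))) :
    Module.finrank (ZMod 2) (extendedCode (BCHCode n β {1})) = n - 2 * s ∧
    minDist (extendedCode (BCHCode n β {1})) = 4 ∧
    (∀ D : Submodule (ZMod 2) (Fin (n + 1) → ZMod 2),
      Module.finrank (ZMod 2) D = n - 2 * s → minDist D ≤ 4) ∧
    Module.finrank (ZMod 2) E = 2 * s + 1 ∧
    weightCount E 0 = 1 ∧
    weightCount E w1 = n ∧
    weightCount E w2 = 2 * n ∧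
    weightCount E (n + 1 - w1) = n ∧
    weightCount E (n + 1 - w2) = 2 * n ∧
    weightCount E (n + 1) = 1 ∧
    ∀ w : ℕ, w ≠ 0 → w ≠ w1 → w ≠ w2 → w ≠ n + 1 - w1 → w ≠ n + 1 - w2 →
      w ≠ n + 1 → weightCount E w = 0 := by
  have horder : orderOf β = n := by
    have hcard : orderOf α = 3 * n := by
      have := hn ▸ three_mul_four_pow_sub_one_div_three s
      rw [hα, pow_mul, show 2 ^ 2 = 4 from rfl]
      omega
    rw [hβ, orderOf_pow_of_dvd three_ne_zero (hcard ▸ dvd_mul_right 3 n), hcard,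
      Nat.mul_div_cancel_left n three_pos]
  exact stmt_16_general (by omega) (GaloisField.finrank 2 (by omega)) hn horder hw1 hw2 hE
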